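/- Fix ε > 0 and δ ∈ (0,1). Suppose there exists an optimal occupancy d*_0 with d*_0(s,a)/d^D(s,a) ≤ B_{w,0} for all (s,a), d^D = d^{π_D}, and the assumptions of the constrained analysis hold with B_w = B_{w,0} and α = α'_ε := ε/(4B_{f,0}): v*_{α'_ε,B_{w,0}} ∈ V, w*_{α'_ε,B_{w,0}} ∈ W, 0 ≤ w ≤ B_{w,0} for all w ∈ W, f M_f-strongly convex with |f'| ≤ B_{f',0} and |f| ≤ B_{f,0} on [0,B_{w,0}], ‖v‖_∞ ≤ B_{v,0} = (α'_ε·B_{f',0}+1)/(1−γ) for all v ∈ V. Then there is a universal constant C1 such that if n ≥ C1·(ε·B_{f,0} + 4·B_{w,0}·B_{e,0}·B_{f,0})²/(ε⁶·M_f²·(1−γ)⁴)·log(4|V||W|/δ) and n0 ≥ C1·(4·B_{v,0}·B_{f,0})²/(ε⁶·M_f²·(1−γ)²)·log(4|V|/δ), then PRO-RL with input α = α'_ε outputs π̂ with J(π*_0) − J(π̂) ≤ ε with probability at least 1−δ, where B_{e,0} = (1+γ)B_{v,0}+1. -/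

import Mathlib

open MeasureTheory
open scoped BigOperators ENNReal

namespace ProRL

/-- The discrete measure on a type induced by a real-valued weight function. -/
noncomputable def discMeasure {X : Type*} [MeasurableSpace X] (p : X → ℝ) : Measure X :=
  Measure.sum fun x => ENNReal.ofReal (p x) • Measure.dirac x

variable {S A : Type*} [Fintype S] [Fintype A]

/-- The `t`-step state-action distribution of policy `π` started from `μ0`. -/
noncomputable def saDist (P : S → A → S → ℝ) (μ0 : S → ℝ) (π : S → A → ℝ) :
    ℕ → S → A → ℝ
  | 0 => fun s a => μ0 s * π s a
  | t + 1 => fun s a =>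
      (∑ s' : S, ∑ a' : A, saDist P μ0 π t s' a' * P s' a' s) * π s a

/-- The discounted state-action occupancy `d^π(s,a)`. -/
noncomputable def occ (P : S → A → S → ℝ) (μ0 : S → ℝ) (γ : ℝ) (π : S → A → ℝ)
    (s : S) (a : A) : ℝ :=
  (1 - γ) * ∑' t : ℕ, γ ^ t * saDist P μ0 π t s a

/-- The (normalized) expected discounted return `J(π) = E_{d^π}[r]`. -/
noncomputable def Jret (P : S → A → S → ℝ) (r : S → A → ℝ) (μ0 : S → ℝ) (γ : ℝ)
    (π : S → A → ℝ) : ℝ :=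
  ∑ s : S, ∑ a : A, occ P μ0 γ π s a * r s a

/-- `π` is a (stationary, stochastic) policy. -/
def IsPolicy (π : S → A → ℝ) : Prop :=
  (∀ s a, 0 ≤ π s a) ∧ ∀ s, ∑ a : A, π s a = 1

/-- The Bellman residual `e_v(s,a) = r(s,a) + γ ∑_{s'} P(s'|s,a) v(s') − v(s)`. -/
noncomputable def eV (P : S → A → S → ℝ) (r : S → A → ℝ) (γ : ℝ) (v : S → ℝ)
    (s : S) (a : A) : ℝ :=
  r s a + γ * ∑ s' : S, P s a s' * v s' - v s

/-- The population Lagrangian `L_α(v,w)`. -/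
noncomputable def Lag (P : S → A → S → ℝ) (r : S → A → ℝ) (μ0 : S → ℝ) (γ : ℝ)
    (dD : S → A → ℝ) (f : ℝ → ℝ) (α : ℝ) (v : S → ℝ) (w : S → A → ℝ) : ℝ :=
  (1 - γ) * ∑ s : S, μ0 s * v s
    - α * ∑ s : S, ∑ a : A, dD s a * f (w s a)
    + ∑ s : S, ∑ a : A, dD s a * (w s a * eV P r γ v s a)

/-- The empirical Lagrangian `L̂_α(v,w)` built from the transition dataset `D`
(`D i = ((sᵢ,aᵢ), s'ᵢ)`, with `rᵢ = r sᵢ aᵢ`) and initial-state dataset `D0`. -/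
noncomputable def empLag (r : S → A → ℝ) (γ : ℝ) (f : ℝ → ℝ) (α : ℝ) {n n0 : ℕ}
    (D : Fin n → (S × A) × S) (D0 : Fin n0 → S) (v : S → ℝ) (w : S → A → ℝ) : ℝ :=
  (1 - γ) * ((n0 : ℝ)⁻¹ * ∑ j : Fin n0, v (D0 j))
    - α * ((n : ℝ)⁻¹ * ∑ i : Fin n, f (w (D i).1.1 (D i).1.2))
    + (n : ℝ)⁻¹ * ∑ i : Fin n,
        w (D i).1.1 (D i).1.2 *
          (r (D i).1.1 (D i).1.2 + γ * v (D i).2 - v (D i).1.1)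

/-- Per-state normalization of a state-action weight into a policy
(uniform where the state marginal is not positive). -/
noncomputable def normPolicy (d : S → A → ℝ) (s : S) (a : A) : ℝ :=
  if 0 < ∑ a' : A, d s a' then d s a / ∑ a' : A, d s a'
  else (Fintype.card A : ℝ)⁻¹

/-- Policy extraction from a density ratio `w` and a behavior policy `piD`
(uniform where the normalizer vanishes). -/
noncomputable def extractPolicy (piD w : S → A → ℝ) (s : S) (a : A) : ℝ :=
  if 0 < ∑ a' : A, w s a' * piD s a' then
    w s a * piD s a / ∑ a' : A, w s a' * piD s a'
  else (Fintype.card A : ℝ)⁻¹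

/-- Behavior policy `π_D(a|s)` obtained from the data distribution `d^D`. -/
noncomputable def behPolicy (dD : S → A → ℝ) : S → A → ℝ := normPolicy dD

/-- The state-action measure `d(s,a) = w(s,a)·d^D(s,a)`. -/
noncomputable def dstar (dD w : S → A → ℝ) : S → A → ℝ := fun s a => w s a * dD s a

/-- The weighted `L²(d^D)` norm of a state-action function. -/
noncomputable def l2nrm (dD g : S → A → ℝ) : ℝ :=
  Real.sqrt (∑ s : S, ∑ a : A, dD s a * g s a ^ 2)

/-- `‖π(·|s) − π'(·|s)‖₁`. -/
noncomputable def l1Pol (π π' : S → A → ℝ) (s : S) : ℝ := ∑ a : A, |π s a - π' s a|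

/-- `E_{s ∼ d}[‖π(·|s) − π'(·|s)‖₁]` where `d` is a state-action distribution. -/
noncomputable def expL1 (d π π' : S → A → ℝ) : ℝ :=
  ∑ s : S, (∑ a : A, d s a) * l1Pol π π' s

/-- The statistical error term `ε_stat`. -/
noncomputable def epsStat (γ α Bv Bf Bw Be δ : ℝ) (nV nW n n0 : ℕ) : ℝ :=
  (1 - γ) * Bv * Real.sqrt (2 * Real.log (4 * (nV : ℝ) / δ) / (n0 : ℝ))
    + (α * Bf + Bw * Be) *
        Real.sqrt (2 * Real.log (4 * ((nV : ℝ) * (nW : ℝ)) / δ) / (n : ℝ))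

/-- The Bellman flow equations for a state-action measure `d`. -/
def BellmanFlow (P : S → A → S → ℝ) (μ0 : S → ℝ) (γ : ℝ) (d : S → A → ℝ) : Prop :=
  ∀ s : S, ∑ a : A, d s a
    = (1 - γ) * μ0 s + γ * ∑ s' : S, ∑ a' : A, P s' a' s * d s' a'

/-- `(v,w)` is a saddle point of `max_{w ≥ 0} min_v L_α(v,w)`. -/
def IsSaddle (P : S → A → S → ℝ) (r : S → A → ℝ) (μ0 : S → ℝ) (γ : ℝ)
    (dD : S → A → ℝ) (f : ℝ → ℝ) (α : ℝ) (v : S → ℝ) (w : S → A → ℝ) : Prop :=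
  (∀ s a, 0 ≤ w s a) ∧
  (∀ v' : S → ℝ, Lag P r μ0 γ dD f α v w ≤ Lag P r μ0 γ dD f α v' w) ∧
  (∀ w' : S → A → ℝ, (∀ s a, 0 ≤ w' s a) →
    Lag P r μ0 γ dD f α v w' ≤ Lag P r μ0 γ dD f α v w)

/-- `(v,w)` is a saddle point of `max_{0 ≤ w ≤ Bw} min_v L_α(v,w)` (constrained LP). -/
def IsSaddleB (P : S → A → S → ℝ) (r : S → A → ℝ) (μ0 : S → ℝ) (γ : ℝ)
    (dD : S → A → ℝ) (f : ℝ → ℝ) (α Bw : ℝ) (v : S → ℝ) (w : S → A → ℝ) : Prop :=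
  (∀ s a, 0 ≤ w s a ∧ w s a ≤ Bw) ∧
  (∀ v' : S → ℝ, Lag P r μ0 γ dD f α v w ≤ Lag P r μ0 γ dD f α v' w) ∧
  (∀ w' : S → A → ℝ, (∀ s a, 0 ≤ w' s a ∧ w' s a ≤ Bw) →
    Lag P r μ0 γ dD f α v w' ≤ Lag P r μ0 γ dD f α v w)

/-- `(vhat, what)` is an exact max-min point of the empirical Lagrangian over `V × W`:
`vhat ∈ argmin_{v ∈ V} L̂(v, what)` and `what ∈ argmax_{w ∈ W} min_{v ∈ V} L̂(v, w)`. -/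
def IsProRLOutput (r : S → A → ℝ) (γ : ℝ) (f : ℝ → ℝ) (α : ℝ)
    (V : Finset (S → ℝ)) (W : Finset (S → A → ℝ)) {n n0 : ℕ}
    (D : Fin n → (S × A) × S) (D0 : Fin n0 → S)
    (vhat : S → ℝ) (what : S → A → ℝ) : Prop :=
  vhat ∈ V ∧ what ∈ W ∧
  (∀ v ∈ V, empLag r γ f α D D0 vhat what ≤ empLag r γ f α D D0 v what) ∧
  ∀ w ∈ W, ∀ vw ∈ V,
    (∀ v ∈ V, empLag r γ f α D D0 vw w ≤ empLag r γ f α D D0 v w) →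
      empLag r γ f α D D0 vw w ≤ empLag r γ f α D D0 vhat what

/-- Weight of a transition tuple `((s,a),s')` under `(s,a) ∼ d^D`, `s' ∼ P(·|s,a)`. -/
noncomputable def tupleWeight (P : S → A → S → ℝ) (dD : S → A → ℝ)
    (x : (S × A) × S) : ℝ :=
  dD x.1.1 x.1.2 * P x.1.1 x.1.2 x.2

/-- The joint law of the transition dataset `D` (i.i.d. from `d^D ⊗ P`) and the
initial-state dataset `D0` (i.i.d. from `μ0`). -/
noncomputable def dataMeasure [MeasurableSpace S] [MeasurableSpace A]
    (P : S → A → S → ℝ) (dD : S → A → ℝ) (μ0 : S → ℝ) (n n0 : ℕ) :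
    Measure ((Fin n → (S × A) × S) × (Fin n0 → S)) :=
  (Measure.pi fun _ : Fin n => discMeasure (tupleWeight P dD)).prod
    (Measure.pi fun _ : Fin n0 => discMeasure μ0)

/-- The joint law of datasets `D1`, `D2` (both i.i.d. from `d^D ⊗ P`) and `D0`
(i.i.d. from `μ0`), used by PRO-RL-BC. -/
noncomputable def dataMeasure3 [MeasurableSpace S] [MeasurableSpace A]
    (P : S → A → S → ℝ) (dD : S → A → ℝ) (μ0 : S → ℝ) (n1 n2 n0 : ℕ) :
    Measure ((Fin n1 → (S × A) × S) × (Fin n2 → (S × A) × S) × (Fin n0 → S)) :=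
  (Measure.pi fun _ : Fin n1 => discMeasure (tupleWeight P dD)).prod
    ((Measure.pi fun _ : Fin n2 => discMeasure (tupleWeight P dD)).prod
      (Measure.pi fun _ : Fin n0 => discMeasure μ0))

/-- `v` is the optimal value function: it satisfies the Bellman optimality equation. -/
def IsOptValue [Nonempty A] (P : S → A → S → ℝ) (r : S → A → ℝ) (γ : ℝ)
    (v : S → ℝ) : Prop :=
  ∀ s : S, v s = Finset.univ.sup' Finset.univ_nonempty
    (fun a : A => r s a + γ * ∑ s' : S, P s a s' * v s')

/-- Basic assumptions on the MDP, the regularizer-free data, and the data distribution. -/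
structure MDPAssumptions (P : S → A → S → ℝ) (r : S → A → ℝ) (μ0 : S → ℝ) (γ : ℝ)
    (dD : S → A → ℝ) : Prop where
  P_nonneg : ∀ s a s', 0 ≤ P s a s'
  P_sum : ∀ s a, ∑ s' : S, P s a s' = 1
  r_nonneg : ∀ s a, 0 ≤ r s a
  r_le_one : ∀ s a, r s a ≤ 1
  γ_nonneg : 0 ≤ γ
  γ_lt_one : γ < 1
  μ0_pos : ∀ s, 0 < μ0 s
  μ0_sum : ∑ s : S, μ0 s = 1
  dD_nonneg : ∀ s a, 0 ≤ dD s a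
  dD_sum : ∑ s : S, ∑ a : A, dD s a = 1

/-- Regularity of the regularizer `f`: continuously differentiable with derivative `f'`,
`M_f`-strongly convex, and with `|f'| ≤ Bf'`, `|f| ≤ Bf` on `[0, Bw]`. -/
structure RegAssumptions (f f' : ℝ → ℝ) (Mf Bw Bf' Bf : ℝ) : Prop where
  deriv : ∀ x, HasDerivAt f (f' x) x
  strong : StrongConvexOn Set.univ Mf f
  Mf_pos : 0 < Mf
  f'_bdd : ∀ x, 0 ≤ x → x ≤ Bw → |f' x| ≤ Bf'
  f_bdd : ∀ x, 0 ≤ x → x ≤ Bw → |f x| ≤ Bf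

/-- `w` is an optimal density ratio of the unregularized LP (the set `W*₀`). -/
def OptRatio (P : S → A → S → ℝ) (r : S → A → ℝ) (μ0 : S → ℝ) (γ : ℝ)
    (dD : S → A → ℝ) (w : S → A → ℝ) : Prop :=
  (∀ s a, 0 ≤ w s a) ∧ BellmanFlow P μ0 γ (dstar dD w) ∧
  ∀ w' : S → A → ℝ, (∀ s a, 0 ≤ w' s a) → BellmanFlow P μ0 γ (dstar dD w') →
    ∑ s : S, ∑ a : A, dstar dD w' s a * r s a
      ≤ ∑ s : S, ∑ a : A, dstar dD w s a * r s a

section Concentration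

variable {X : Type*} [Fintype X] [MeasurableSpace X]

lemma discMeasure_isProbabilityMeasure {p : X → ℝ} (hp : ∀ x, 0 ≤ p x) (hs : ∑ x, p x = 1) :
    IsProbabilityMeasure (discMeasure p) := by
  constructor
  rw [discMeasure, Measure.sum_apply _ MeasurableSet.univ]
  simp only [Measure.smul_apply, measure_univ, smul_eq_mul, mul_one]
  rw [tsum_fintype, ← ENNReal.ofReal_sum_of_nonneg fun i _ => hp i, hs, ENNReal.ofReal_one]

variable [MeasurableSingletonClass X]

lemma integral_discMeasure {p : X → ℝ} (hp : ∀ x, 0 ≤ p x) (g : X → ℝ) :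
    ∫ x, g x ∂(discMeasure p) = ∑ x, p x * g x := by
  rw [discMeasure, Measure.sum_fintype, integral_finsetSum_measure]
  · refine Finset.sum_congr rfl fun x _ => ?_
    rw [integral_smul_measure, integral_dirac, ENNReal.toReal_ofReal (hp x), smul_eq_mul]
  · intro x _
    exact (integrable_dirac (by simp)).smul_measure ENNReal.ofReal_ne_top

lemma hoeffding_upper {p : X → ℝ} (hp : ∀ x, 0 ≤ p x) (hs : ∑ x, p x = 1) {g : X → ℝ} {B : ℝ}
    (hB : 0 < B) (hg : ∀ x, |g x| ≤ B) {m : ℕ} (hm : 0 < m) {t : ℝ} (ht : 0 ≤ t) :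
    (Measure.pi fun _ : Fin m => discMeasure p).real
        {ω | t ≤ (m : ℝ)⁻¹ * ∑ i, g (ω i) - ∑ x, p x * g x}
      ≤ Real.exp (-(m * t ^ 2 / (2 * B ^ 2))) := by
  have := discMeasure_isProbabilityMeasure hp hs
  have hm' : (0 : ℝ) < m := by exact_mod_cast hm
  set c : ℝ := ∑ x, p x * g x with hc
  have hind : ProbabilityTheory.iIndepFun
      (fun (i : Fin m) (ω : Fin m → X) => g (ω i) - c)
      (Measure.pi fun _ : Fin m => discMeasure p) :=
    ProbabilityTheory.iIndepFun_pi (X := fun _ x => g x - c)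
      fun _ => (measurable_of_finite _).aemeasurable
  have hsub : ∀ i ∈ (Finset.univ : Finset (Fin m)), ProbabilityTheory.HasSubgaussianMGF
      (fun ω : Fin m → X => g (ω i) - c) ((‖B - -B‖₊ / 2) ^ 2)
      (Measure.pi fun _ : Fin m => discMeasure p) := by
    intro i _
    have h := ProbabilityTheory.hasSubgaussianMGF_of_mem_Icc
      (μ := Measure.pi fun _ : Fin m => discMeasure p) (X := fun ω => g (ω i)) (a := -B) (b := B)
      (measurable_of_finite _).aemeasurable (ae_of_all _ fun ω => abs_le.mp (hg (ω i)))
    rwa [integral_comp_eval (μ := fun _ : Fin m => discMeasure p)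
      (measurable_of_finite g).aestronglyMeasurable, integral_discMeasure hp] at h
  have h := ProbabilityTheory.HasSubgaussianMGF.measure_sum_ge_le_of_iIndepFun hind hsub
    (mul_nonneg hm'.le ht)
  convert h using 2
  · ext ω
    simp only [Set.mem_ofPred_eq, Finset.sum_sub_distrib, Finset.sum_const, Finset.card_univ,
      Fintype.card_fin, nsmul_eq_mul]
    rw [← mul_le_mul_iff_right₀ hm', mul_sub, mul_inv_cancel_left₀ hm'.ne']
  · have h2 : ‖B - -B‖ = 2 * B := by
      rw [Real.norm_eq_abs, abs_of_pos] <;> linarith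
    simp only [Finset.sum_const, Finset.card_univ, Fintype.card_fin, nsmul_eq_mul,
      NNReal.coe_mul, NNReal.coe_natCast, NNReal.coe_pow, NNReal.coe_div, coe_nnnorm, h2,
      NNReal.coe_ofNat]
    field_simp

/-- Two-sided Hoeffding inequality for the empirical mean of i.i.d. draws. -/
lemma hoeffding_abs {p : X → ℝ} (hp : ∀ x, 0 ≤ p x) (hs : ∑ x, p x = 1) {g : X → ℝ} {B : ℝ}
    (hB : 0 < B) (hg : ∀ x, |g x| ≤ B) {m : ℕ} (hm : 0 < m) {t : ℝ} (ht : 0 ≤ t) :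
    (Measure.pi fun _ : Fin m => discMeasure p).real
        {ω | t < |(m : ℝ)⁻¹ * ∑ i, g (ω i) - ∑ x, p x * g x|}
      ≤ 2 * Real.exp (-(m * t ^ 2 / (2 * B ^ 2))) := by
  have := discMeasure_isProbabilityMeasure hp hs
  have h1 := hoeffding_upper hp hs hB hg hm ht
  have h2 := hoeffding_upper hp hs (g := fun x => -g x) hB (fun x => by simpa using hg x) hm ht
  have hsub : {ω : Fin m → X | t < |(m : ℝ)⁻¹ * ∑ i, g (ω i) - ∑ x, p x * g x|} ⊆
      {ω | t ≤ (m : ℝ)⁻¹ * ∑ i, g (ω i) - ∑ x, p x * g x} ∪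
      {ω | t ≤ (m : ℝ)⁻¹ * ∑ i, -g (ω i) - ∑ x, p x * -g x} := by
    intro ω hω
    rw [Set.mem_ofPred_eq] at hω
    rcases lt_abs.mp hω with h | h
    · exact Or.inl h.le
    · right
      simp only [Set.mem_ofPred_eq, Finset.sum_neg_distrib, mul_neg]
      linarith
  calc _ ≤ _ := measureReal_mono hsub
    _ ≤ _ := measureReal_union_le _ _
    _ ≤ _ := by linarith

/-- Uniform deviation bound over a finite family of bounded functions. -/
lemma uniform_deviation {ι : Type*} {p : X → ℝ} (hp : ∀ x, 0 ≤ p x) (hs : ∑ x, p x = 1)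
    (F : Finset ι) (hF : F.Nonempty) {g : ι → X → ℝ} {B : ℝ} (hB : 0 < B)
    (hg : ∀ i ∈ F, ∀ x, |g i x| ≤ B) {m : ℕ} (hm : 0 < m) {t δ : ℝ} (ht : 0 < t) (hδ : 0 < δ)
    (hmt : 2 * B ^ 2 / t ^ 2 * Real.log (4 * F.card / δ) ≤ m) :
    (Measure.pi fun _ : Fin m => discMeasure p)
        {ω | ∃ i ∈ F, t < |(m : ℝ)⁻¹ * ∑ k, g i (ω k) - ∑ x, p x * g i x|}
      ≤ ENNReal.ofReal (δ / 2) := by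
  have := discMeasure_isProbabilityMeasure hp hs
  have hcard : (0 : ℝ) < F.card := by exact_mod_cast hF.card_pos
  have hexp : 2 * Real.exp (-(m * t ^ 2 / (2 * B ^ 2))) ≤ δ / (2 * F.card) := by
    have hlog : Real.log (4 * F.card / δ) ≤ m * t ^ 2 / (2 * B ^ 2) := by
      rw [le_div_iff₀ (by positivity)]
      rw [div_mul_eq_mul_div, div_le_iff₀ (by positivity)] at hmt
      linarith
    calc 2 * Real.exp (-(m * t ^ 2 / (2 * B ^ 2)))
        ≤ 2 * Real.exp (-Real.log (4 * F.card / δ)) := by gcongr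
      _ = δ / (2 * F.card) := by
        rw [Real.exp_neg, Real.exp_log (by positivity)]
        field_simp
        norm_num
  have hset : {ω : Fin m → X | ∃ i ∈ F, t < |(m : ℝ)⁻¹ * ∑ k, g i (ω k) - ∑ x, p x * g i x|} =
      ⋃ i ∈ F, {ω | t < |(m : ℝ)⁻¹ * ∑ k, g i (ω k) - ∑ x, p x * g i x|} := by
    ext ω; simp
  rw [hset, ← ofReal_measureReal (measure_ne_top _ _)]
  refine ENNReal.ofReal_le_ofReal ((measureReal_biUnion_finset_le _ _).trans ?_)
  calc _ ≤ ∑ _i ∈ F, δ / (2 * F.card) := Finset.sum_le_sum fun i hi =>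
        (hoeffding_abs hp hs hB (hg i hi) hm ht.le).trans hexp
    _ = δ / 2 := by
      rw [Finset.sum_const, nsmul_eq_mul]
      field_simp

end Concentration

section Occupancy

variable {P : S → A → S → ℝ} {r : S → A → ℝ} {μ0 : S → ℝ} {γ : ℝ} {dD : S → A → ℝ}
  {π : S → A → ℝ}

lemma saDist_nonneg (hM : MDPAssumptions P r μ0 γ dD) (hπ : IsPolicy π) (t : ℕ) (s : S) (a : A) :
    0 ≤ saDist P μ0 π t s a := by
  induction t generalizing s a with
  | zero => exact mul_nonneg (hM.μ0_pos s).le (hπ.1 s a)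
  | succ t ih =>
    exact mul_nonneg (Finset.sum_nonneg fun s' _ => Finset.sum_nonneg fun a' _ =>
      mul_nonneg (ih s' a') (hM.P_nonneg s' a' s)) (hπ.1 s a)

lemma sum_saDist_succ (hπ : IsPolicy π) (t : ℕ) (s : S) :
    ∑ a, saDist P μ0 π (t + 1) s a = ∑ s', ∑ a', saDist P μ0 π t s' a' * P s' a' s := by
  simp only [saDist]
  rw [← Finset.mul_sum, hπ.2 s, mul_one]

lemma saDist_eq_sum_mul (hπ : IsPolicy π) (t : ℕ) (s : S) (a : A) :
    saDist P μ0 π t s a = (∑ a', saDist P μ0 π t s a') * π s a := by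
  cases t with
  | zero => simp only [saDist]; rw [← Finset.mul_sum, hπ.2 s, mul_one]
  | succ t => rw [sum_saDist_succ hπ, saDist]

lemma sum_saDist (hM : MDPAssumptions P r μ0 γ dD) (hπ : IsPolicy π) (t : ℕ) :
    ∑ s, ∑ a, saDist P μ0 π t s a = 1 := by
  induction t with
  | zero =>
    simp only [saDist, ← Finset.mul_sum, hπ.2, mul_one]
    exact hM.μ0_sum
  | succ t ih =>
    simp only [sum_saDist_succ hπ]
    rw [Finset.sum_comm, ← ih]
    refine Finset.sum_congr rfl fun s' _ => ?_
    rw [Finset.sum_comm]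
    refine Finset.sum_congr rfl fun a' _ => ?_
    rw [← Finset.mul_sum, hM.P_sum, mul_one]

lemma saDist_le_one (hM : MDPAssumptions P r μ0 γ dD) (hπ : IsPolicy π) (t : ℕ) (s : S) (a : A) :
    saDist P μ0 π t s a ≤ 1 := by
  rw [← sum_saDist hM hπ t]
  calc saDist P μ0 π t s a ≤ ∑ a, saDist P μ0 π t s a :=
        Finset.single_le_sum (fun a _ => saDist_nonneg hM hπ t s a) (Finset.mem_univ a)
    _ ≤ _ := Finset.single_le_sum (f := fun s => ∑ a, saDist P μ0 π t s a)
        (fun s _ => Finset.sum_nonneg fun a _ => saDist_nonneg hM hπ t s a) (Finset.mem_univ s)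

lemma summable_saDist (hM : MDPAssumptions P r μ0 γ dD) (hπ : IsPolicy π) (s : S) (a : A) :
    Summable fun t : ℕ => γ ^ t * saDist P μ0 π t s a := by
  refine Summable.of_nonneg_of_le
    (fun t => mul_nonneg (pow_nonneg hM.γ_nonneg t) (saDist_nonneg hM hπ t s a))
    (fun t => mul_le_of_le_one_right (pow_nonneg hM.γ_nonneg t) (saDist_le_one hM hπ t s a))
    (summable_geometric_of_lt_one hM.γ_nonneg hM.γ_lt_one)

lemma occ_nonneg (hM : MDPAssumptions P r μ0 γ dD) (hπ : IsPolicy π) (s : S) (a : A) :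
    0 ≤ occ P μ0 γ π s a :=
  mul_nonneg (sub_nonneg.mpr hM.γ_lt_one.le) (tsum_nonneg fun t =>
    mul_nonneg (pow_nonneg hM.γ_nonneg t) (saDist_nonneg hM hπ t s a))

lemma occ_eq_sum_mul (hM : MDPAssumptions P r μ0 γ dD) (hπ : IsPolicy π) (s : S) (a : A) :
    occ P μ0 γ π s a = (∑ a', occ P μ0 γ π s a') * π s a := by
  simp only [occ]
  rw [← Finset.mul_sum, ← Summable.tsum_finsetSum fun a' _ => summable_saDist hM hπ s a', mul_assoc,
    ← tsum_mul_right]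
  congr 1
  refine tsum_congr fun t => ?_
  rw [← Finset.mul_sum, mul_assoc, ← saDist_eq_sum_mul hπ]

lemma bellmanFlow_occ (hM : MDPAssumptions P r μ0 γ dD) (hπ : IsPolicy π) :
    BellmanFlow P μ0 γ (occ P μ0 γ π) := by
  intro s
  have hG := fun s a => (summable_saDist hM hπ s a).hasSum
  have h1 : HasSum (fun t => ∑ a, γ ^ t * saDist P μ0 π t s a) _ :=
    hasSum_sum fun a _ => hG s a
  have h2 : HasSum (fun t => ∑ s', ∑ a', γ * P s' a' s * (γ ^ t * saDist P μ0 π t s' a')) _ :=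
    hasSum_sum fun s' _ => hasSum_sum fun a' _ => (hG s' a').mul_left (γ * P s' a' s)
  have h3 : (fun t => ∑ s', ∑ a', γ * P s' a' s * (γ ^ t * saDist P μ0 π t s' a')) =
      fun t => ∑ a, γ ^ (t + 1) * saDist P μ0 π (t + 1) s a := by
    funext t
    rw [← Finset.mul_sum, sum_saDist_succ hπ, Finset.mul_sum]
    refine Finset.sum_congr rfl fun s' _ => ?_
    rw [Finset.mul_sum]
    refine Finset.sum_congr rfl fun a' _ => ?_
    ring
  rw [h3] at h2
  have h4 := h1.unique
    (h2.zero_add (f := fun t => ∑ a, γ ^ t * saDist P μ0 π t s a))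
  have h0 : ∑ a, γ ^ 0 * saDist P μ0 π 0 s a = μ0 s := by
    simp only [pow_zero, one_mul, saDist]
    rw [← Finset.mul_sum, hπ.2, mul_one]
  simp only [occ]
  rw [← Finset.mul_sum, h4, h0, mul_add]
  congr 1
  simp only [Finset.mul_sum]
  refine Finset.sum_congr rfl fun s' _ => Finset.sum_congr rfl fun a' _ => ?_
  ring

/-- Pairing a Bellman flow with a state function. -/
lemma BellmanFlow.pairing {d : S → A → ℝ} (hd : BellmanFlow P μ0 γ d) (v : S → ℝ) :
    (1 - γ) * ∑ s, μ0 s * v s = ∑ s, ∑ a, d s a * (v s - γ * ∑ s', P s a s' * v s') := by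
  have h1 : ∑ s, ∑ a, d s a * v s
      = (1 - γ) * ∑ s, μ0 s * v s + γ * ∑ s, (∑ s', ∑ a', P s' a' s * d s' a') * v s := by
    rw [Finset.mul_sum, Finset.mul_sum, ← Finset.sum_add_distrib]
    refine Finset.sum_congr rfl fun s _ => ?_
    rw [← Finset.sum_mul, hd s]
    ring
  have h2 : ∑ s, (∑ s', ∑ a', P s' a' s * d s' a') * v s
      = ∑ s, ∑ a, d s a * ∑ s', P s a s' * v s' := by
    simp only [Finset.sum_mul, Finset.mul_sum]
    rw [Finset.sum_comm]
    refine Finset.sum_congr rfl fun s' _ => ?_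
    rw [Finset.sum_comm]
    refine Finset.sum_congr rfl fun a' _ => Finset.sum_congr rfl fun s _ => ?_
    ring
  have h3 : ∑ s, ∑ a, d s a * (v s - γ * ∑ s', P s a s' * v s')
      = ∑ s, ∑ a, d s a * v s - γ * ∑ s, ∑ a, d s a * ∑ s', P s a s' * v s' := by
    rw [Finset.mul_sum, ← Finset.sum_sub_distrib]
    refine Finset.sum_congr rfl fun s _ => ?_
    rw [Finset.mul_sum, ← Finset.sum_sub_distrib]
    refine Finset.sum_congr rfl fun a _ => ?_
    ring
  rw [h3, h1, h2]
  ring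

lemma abs_sum_mul_le {ι : Type*} [Fintype ι] {p x : ι → ℝ} {B : ℝ} (hp : ∀ i, 0 ≤ p i)
    (hs : ∑ i, p i = 1) (hx : ∀ i, |x i| ≤ B) : |∑ i, p i * x i| ≤ B := by
  calc |∑ i, p i * x i| ≤ ∑ i, |p i * x i| := Finset.abs_sum_le_sum_abs _ _
    _ ≤ ∑ i, p i * B := Finset.sum_le_sum fun i _ => by
        rw [abs_mul, abs_of_nonneg (hp i)]
        exact mul_le_mul_of_nonneg_left (hx i) (hp i)
    _ = B := by rw [← Finset.sum_mul, hs, one_mul]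

/-- Every policy has a value function, bounded by `1 / (1 - γ)`. -/
lemma exists_value (hM : MDPAssumptions P r μ0 γ dD) (hπ : IsPolicy π) :
    ∃ v : S → ℝ, (∀ s, v s = ∑ a, π s a * (r s a + γ * ∑ s', P s a s' * v s')) ∧
      ∀ s, |v s| ≤ 1 / (1 - γ) := by
  have hγ := hM.γ_nonneg
  have hγ1 := hM.γ_lt_one
  let T : (S → ℝ) → S → ℝ := fun v s => ∑ a, π s a * (r s a + γ * ∑ s', P s a s' * v s')
  have hT : ContractingWith ⟨γ, hγ⟩ T := by
    refine ⟨hγ1, LipschitzWith.of_dist_le_mul fun u v => ?_⟩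
    refine (dist_pi_le_iff (mul_nonneg hγ dist_nonneg)).mpr fun s => ?_
    have hsub : T u s - T v s = ∑ a, π s a * (γ * ∑ s', P s a s' * (u s' - v s')) := by
      simp only [T]
      rw [← Finset.sum_sub_distrib]
      refine Finset.sum_congr rfl fun a _ => ?_
      simp only [mul_sub, Finset.sum_sub_distrib]
      ring
    rw [Real.dist_eq, hsub]
    refine abs_sum_mul_le (hπ.1 s) (hπ.2 s) fun a => ?_
    rw [abs_mul, abs_of_nonneg hγ]
    refine mul_le_mul_of_nonneg_left ?_ hγ
    refine abs_sum_mul_le (hM.P_nonneg s a) (hM.P_sum s a) fun s' => ?_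
    rw [← Real.dist_eq]
    exact dist_le_pi_dist u v s'
  obtain ⟨v, hv⟩ : ∃ v, T v = v := ⟨_, hT.fixedPoint_isFixedPt⟩
  refine ⟨v, fun s => (congrFun hv s).symm, fun s => ?_⟩
  have hbound : ‖v‖ ≤ 1 + γ * ‖v‖ := by
    refine (pi_norm_le_iff_of_nonneg (by positivity)).mpr fun s => ?_
    rw [← congrFun hv s, Real.norm_eq_abs]
    refine abs_sum_mul_le (hπ.1 s) (hπ.2 s) fun a => ?_
    refine (abs_add_le _ _).trans (add_le_add ?_ ?_)
    · rw [abs_of_nonneg (hM.r_nonneg s a)]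
      exact hM.r_le_one s a
    · rw [abs_mul, abs_of_nonneg hγ]
      exact mul_le_mul_of_nonneg_left
        (abs_sum_mul_le (hM.P_nonneg s a) (hM.P_sum s a) fun s' => norm_le_pi_norm v s') hγ
  refine (norm_le_pi_norm v s).trans ?_
  rw [le_div_iff₀ (by linarith)]
  linarith

/-- Performance difference between a Bellman flow and the value function of a policy. -/
lemma BellmanFlow.performance_difference {d : S → A → ℝ} (hd : BellmanFlow P μ0 γ d) {v : S → ℝ}
    (hv : ∀ s, v s = ∑ a, π s a * (r s a + γ * ∑ s', P s a s' * v s')) :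
    ∑ s, ∑ a, d s a * r s a - (1 - γ) * ∑ s, μ0 s * v s
      = ∑ s, ∑ a, (d s a - (∑ a', d s a') * π s a) * (r s a + γ * ∑ s', P s a s' * v s') := by
  rw [hd.pairing v, ← Finset.sum_sub_distrib]
  refine Finset.sum_congr rfl fun s _ => ?_
  have h1 : ∑ a, (d s a - (∑ a', d s a') * π s a) * (r s a + γ * ∑ s', P s a s' * v s')
      = ∑ a, d s a * (r s a + γ * ∑ s', P s a s' * v s') - (∑ a', d s a') * v s := by
    rw [hv s, Finset.mul_sum, ← Finset.sum_sub_distrib]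
    refine Finset.sum_congr rfl fun a _ => ?_
    ring
  rw [h1, Finset.sum_mul, ← Finset.sum_sub_distrib, ← Finset.sum_sub_distrib]
  refine Finset.sum_congr rfl fun a _ => ?_
  ring

lemma BellmanFlow.sub_Jret_le (hM : MDPAssumptions P r μ0 γ dD) (hπ : IsPolicy π)
    {d : S → A → ℝ} (hd : BellmanFlow P μ0 γ d) :
    ∑ s, ∑ a, d s a * r s a - Jret P r μ0 γ π
      ≤ (∑ s, ∑ a, |d s a - (∑ a', d s a') * π s a|) / (1 - γ) := by
  have hγ := hM.γ_nonneg
  have hγ1 : 0 < 1 - γ := sub_pos.mpr hM.γ_lt_one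
  obtain ⟨v, hv, hvB⟩ := exists_value hM hπ
  have hJ : Jret P r μ0 γ π = (1 - γ) * ∑ s, μ0 s * v s := by
    have h := (bellmanFlow_occ hM hπ).performance_difference hv
    simp only [← occ_eq_sum_mul hM hπ, sub_self, zero_mul, Finset.sum_const_zero] at h
    exact sub_eq_zero.mp h
  rw [hJ, hd.performance_difference hv, Finset.sum_div]
  refine Finset.sum_le_sum fun s _ => ?_
  rw [Finset.sum_div]
  refine Finset.sum_le_sum fun a _ => (le_abs_self _).trans ?_
  rw [abs_mul, div_eq_mul_inv]
  refine mul_le_mul_of_nonneg_left ?_ (abs_nonneg _)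
  have h1 : |∑ s', P s a s' * v s'| ≤ 1 / (1 - γ) :=
    abs_sum_mul_le (hM.P_nonneg s a) (hM.P_sum s a) hvB
  calc |r s a + γ * ∑ s', P s a s' * v s'|
      ≤ |r s a| + |γ * ∑ s', P s a s' * v s'| := abs_add_le _ _
    _ ≤ 1 + γ * (1 / (1 - γ)) := by
      rw [abs_of_nonneg (hM.r_nonneg s a), abs_mul, abs_of_nonneg hγ]
      exact add_le_add (hM.r_le_one s a) (mul_le_mul_of_nonneg_left h1 hγ)
    _ = (1 - γ)⁻¹ := by field_simp; ring

end Occupancy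

section Extraction

lemma isPolicy_normPolicy {α β : Type*} [Fintype β] [Nonempty β] {d : α → β → ℝ}
    (hd : ∀ s a, 0 ≤ d s a) : IsPolicy (normPolicy d) := by
  refine ⟨fun s a => ?_, fun s => ?_⟩
  · unfold normPolicy
    split_ifs with h
    · exact div_nonneg (hd s a) h.le
    · positivity
  · unfold normPolicy
    split_ifs with h
    · rw [← Finset.sum_div, div_self h.ne']
    · simp

lemma extractPolicy_eq_normPolicy {α β : Type*} [Fintype β] (piD w : α → β → ℝ) :
    extractPolicy piD w = normPolicy fun s a => w s a * piD s a := rfl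

variable {α : Type*} [Nonempty A]

lemma isPolicy_extractPolicy {dD w : α → A → ℝ} (hdD : ∀ s a, 0 ≤ dD s a) (hw : ∀ s a, 0 ≤ w s a) :
    IsPolicy (extractPolicy (behPolicy dD) w) := by
  rw [extractPolicy_eq_normPolicy]
  exact isPolicy_normPolicy fun s a => mul_nonneg (hw s a) ((isPolicy_normPolicy hdD).1 s a)

lemma sum_mul_normPolicy {α β : Type*} [Fintype β] {d : α → β → ℝ} (hd : ∀ s a, 0 ≤ d s a)
    (s : α) (a : β) :
    (∑ a', d s a') * normPolicy d s a = d s a := by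
  unfold normPolicy
  split_ifs with h
  · field_simp
  · have h0 : ∑ a', d s a' = 0 := le_antisymm (not_lt.mp h) (Finset.sum_nonneg fun a _ => hd s a)
    rw [h0, zero_mul]
    exact ((Finset.sum_eq_zero_iff_of_nonneg fun a _ => hd s a).mp h0 a (Finset.mem_univ a)).symm

lemma sum_dstar_mul_extractPolicy {dD w : α → A → ℝ} (hdD : ∀ s a, 0 ≤ dD s a)
    (hw : ∀ s a, 0 ≤ w s a) (s : α) (a : A) :
    (∑ a', dstar dD w s a') * extractPolicy (behPolicy dD) w s a = dstar dD w s a := by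
  have h1 : ∀ a, dstar dD w s a = (∑ a', dD s a') * (w s a * behPolicy dD s a) := fun a => by
    rw [mul_left_comm, behPolicy, sum_mul_normPolicy hdD, dstar]
  simp only [h1]
  rw [← Finset.mul_sum, mul_assoc, extractPolicy_eq_normPolicy,
    sum_mul_normPolicy (d := fun s a => w s a * behPolicy dD s a) fun s a =>
      mul_nonneg (hw s a) ((isPolicy_normPolicy hdD).1 s a)]

lemma sum_abs_dstar_sub_le {dD w w' : S → A → ℝ} (hdD : ∀ s a, 0 ≤ dD s a)
    (hw : ∀ s a, 0 ≤ w s a) :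
    ∑ s, ∑ a, |dstar dD w' s a
        - (∑ a', dstar dD w' s a') * extractPolicy (behPolicy dD) w s a|
      ≤ 2 * ∑ s, ∑ a, dD s a * |w s a - w' s a| := by
  rw [Finset.mul_sum]
  refine Finset.sum_le_sum fun s _ => ?_
  have hpol := isPolicy_extractPolicy hdD hw
  have habs : ∀ a, |dstar dD w s a - dstar dD w' s a| = dD s a * |w s a - w' s a| := fun a => by
    rw [dstar, dstar, ← sub_mul, abs_mul, abs_of_nonneg (hdD s a), mul_comm]
  have hsum : |∑ a, dstar dD w s a - ∑ a, dstar dD w' s a| ≤ ∑ a, dD s a * |w s a - w' s a| := by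
    rw [← Finset.sum_sub_distrib]
    simp only [← habs]
    exact Finset.abs_sum_le_sum_abs _ _
  calc _ ≤ ∑ a, (dD s a * |w s a - w' s a| + |∑ a, dstar dD w s a - ∑ a, dstar dD w' s a|
          * extractPolicy (behPolicy dD) w s a) := by
        refine Finset.sum_le_sum fun a _ => ?_
        rw [← habs, ← abs_of_nonneg (hpol.1 s a), ← abs_mul, abs_of_nonneg (hpol.1 s a), sub_mul,
          sum_dstar_mul_extractPolicy hdD hw, abs_sub_comm (dstar dD w s a)]
        refine le_trans (le_of_eq ?_) (abs_add_le _ _)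
        congr 1
        ring
    _ = ∑ a, dD s a * |w s a - w' s a| + |∑ a, dstar dD w s a - ∑ a, dstar dD w' s a| := by
        rw [Finset.sum_add_distrib, ← Finset.mul_sum, hpol.2, mul_one]
    _ ≤ _ := by linarith

end Extraction

section Lagrangian

variable {P : S → A → S → ℝ} {r : S → A → ℝ} {μ0 : S → ℝ} {γ : ℝ} {dD : S → A → ℝ}
  {f : ℝ → ℝ} {α Bw Mf Bf : ℝ}

/-- The Lagrangian as objective plus multipliers against the Bellman flow residual. -/
lemma Lag_eq (v : S → ℝ) (w : S → A → ℝ) :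
    Lag P r μ0 γ dD f α v w
      = ∑ s, ∑ a, dstar dD w s a * r s a - α * ∑ s, ∑ a, dD s a * f (w s a)
        + ∑ s, v s * ((1 - γ) * μ0 s + γ * (∑ s', ∑ a', P s' a' s * dstar dD w s' a')
            - ∑ a, dstar dD w s a) := by
  have h1 : ∑ s, v s * (∑ s', ∑ a', P s' a' s * dstar dD w s' a')
      = ∑ s, ∑ a, dstar dD w s a * ∑ s', P s a s' * v s' := by
    simp only [Finset.mul_sum]
    rw [Finset.sum_comm]
    refine Finset.sum_congr rfl fun s' _ => ?_
    rw [Finset.sum_comm]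
    refine Finset.sum_congr rfl fun a' _ => Finset.sum_congr rfl fun s _ => ?_
    ring
  have h2 : ∑ s, v s * ((1 - γ) * μ0 s + γ * (∑ s', ∑ a', P s' a' s * dstar dD w s' a')
      - ∑ a, dstar dD w s a)
      = (1 - γ) * ∑ s, μ0 s * v s + γ * (∑ s, v s * (∑ s', ∑ a', P s' a' s * dstar dD w s' a'))
        - ∑ s, ∑ a, dstar dD w s a * v s := by
    rw [Finset.mul_sum, Finset.mul_sum, ← Finset.sum_add_distrib, ← Finset.sum_sub_distrib]
    refine Finset.sum_congr rfl fun s _ => ?_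
    rw [← Finset.sum_mul]
    ring
  have h3 : ∑ s, ∑ a, dD s a * (w s a * eV P r γ v s a)
      = ∑ s, ∑ a, dstar dD w s a * r s a
        + γ * (∑ s, ∑ a, dstar dD w s a * ∑ s', P s a s' * v s')
        - ∑ s, ∑ a, dstar dD w s a * v s := by
    rw [Finset.mul_sum, ← Finset.sum_add_distrib, ← Finset.sum_sub_distrib]
    refine Finset.sum_congr rfl fun s _ => ?_
    rw [Finset.mul_sum, ← Finset.sum_add_distrib, ← Finset.sum_sub_distrib]
    refine Finset.sum_congr rfl fun a _ => ?_
    simp only [eV, dstar]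
    ring
  rw [h2, h1, Lag, h3]
  ring

lemma Lag_of_bellmanFlow {w : S → A → ℝ} (hw : BellmanFlow P μ0 γ (dstar dD w)) (v : S → ℝ) :
    Lag P r μ0 γ dD f α v w
      = ∑ s, ∑ a, dstar dD w s a * r s a - α * ∑ s, ∑ a, dD s a * f (w s a) := by
  rw [Lag_eq, add_eq_left]
  refine Finset.sum_eq_zero fun s _ => ?_
  rw [hw s, sub_self, mul_zero]

/-- The primal part of a saddle point satisfies the Bellman flow equations. -/
lemma IsSaddleB.bellmanFlow {v : S → ℝ} {w : S → A → ℝ}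
    (h : IsSaddleB P r μ0 γ dD f α Bw v w) : BellmanFlow P μ0 γ (dstar dD w) := by
  set c : S → ℝ := fun s => (1 - γ) * μ0 s + γ * (∑ s', ∑ a', P s' a' s * dstar dD w s' a')
    - ∑ a, dstar dD w s a with hc
  have hle := h.2.1 fun s => v s - c s
  rw [Lag_eq, Lag_eq] at hle
  have hsq : ∑ s, c s * c s ≤ 0 := by
    have hs : ∑ s, (v s - c s) * c s = ∑ s, v s * c s - ∑ s, c s * c s := by
      rw [← Finset.sum_sub_distrib]
      exact Finset.sum_congr rfl fun s _ => sub_mul _ _ _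
    simp only [hc] at hs ⊢
    linarith
  have hzero := (Finset.sum_eq_zero_iff_of_nonneg fun s _ => mul_self_nonneg (c s)).mp
    (le_antisymm hsq (Finset.sum_nonneg fun s _ => mul_self_nonneg (c s)))
  intro s
  have := mul_self_eq_zero.mp (hzero s (Finset.mem_univ s))
  simp only [hc] at this
  linarith

/-- Quadratic growth of the Lagrangian around the primal part of a saddle point. -/
lemma IsSaddleB.quadratic_growth (hdD : ∀ s a, 0 ≤ dD s a) (hα : 0 ≤ α)
    (hf : StrongConvexOn Set.univ Mf f) {v : S → ℝ} {w w' : S → A → ℝ}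
    (h : IsSaddleB P r μ0 γ dD f α Bw v w) (hw' : ∀ s a, 0 ≤ w' s a ∧ w' s a ≤ Bw) :
    α * Mf / 4 * ∑ s, ∑ a, dD s a * (w' s a - w s a) ^ 2
      ≤ Lag P r μ0 γ dD f α v w - Lag P r μ0 γ dD f α v w' := by
  have hmid := h.2.2 (fun s a => (w s a + w' s a) / 2) fun s a => by
    have := h.1 s a
    have := hw' s a
    constructor <;> linarith
  have hconv : ∀ x y : ℝ, f ((x + y) / 2) ≤ (f x + f y) / 2 - Mf / 8 * (y - x) ^ 2 := by
    intro x y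
    obtain ⟨-, hf⟩ := hf
    have h := hf (Set.mem_univ x) (Set.mem_univ y) (by norm_num : (0 : ℝ) ≤ 1 / 2)
      (by norm_num : (0 : ℝ) ≤ 1 / 2) (by norm_num)
    simp only [smul_eq_mul, Real.norm_eq_abs, sq_abs] at h
    rw [show (x + y) / 2 = 1 / 2 * x + 1 / 2 * y by ring]
    linarith [sq_abs (x - y)]
  have hlin : ∑ s, ∑ a, dD s a * ((w s a + w' s a) / 2 * eV P r γ v s a)
      = (∑ s, ∑ a, dD s a * (w s a * eV P r γ v s a)
        + ∑ s, ∑ a, dD s a * (w' s a * eV P r γ v s a)) / 2 := by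
    rw [← Finset.sum_add_distrib, Finset.sum_div]
    refine Finset.sum_congr rfl fun s _ => ?_
    rw [← Finset.sum_add_distrib, Finset.sum_div]
    refine Finset.sum_congr rfl fun a _ => ?_
    ring
  have hreg : ∑ s, ∑ a, dD s a * f ((w s a + w' s a) / 2)
      ≤ (∑ s, ∑ a, dD s a * f (w s a) + ∑ s, ∑ a, dD s a * f (w' s a)) / 2
        - Mf / 8 * ∑ s, ∑ a, dD s a * (w' s a - w s a) ^ 2 := by
    rw [← Finset.sum_add_distrib, Finset.sum_div, Finset.mul_sum, ← Finset.sum_sub_distrib]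
    refine Finset.sum_le_sum fun s _ => ?_
    rw [← Finset.sum_add_distrib, Finset.sum_div, Finset.mul_sum, ← Finset.sum_sub_distrib]
    refine Finset.sum_le_sum fun a _ => ?_
    have := mul_le_mul_of_nonneg_left (hconv (w s a) (w' s a)) (hdD s a)
    linarith
  have hreg' := mul_le_mul_of_nonneg_left hreg hα
  simp only [Lag] at hmid ⊢
  rw [hlin] at hmid
  linarith

lemma sum_mul_sq_le {p x : S → A → ℝ} (hs : ∑ s, ∑ a, p s a = 1)
    (hp : ∀ s a, 0 ≤ p s a) :
    (∑ s, ∑ a, p s a * x s a) ^ 2 ≤ ∑ s, ∑ a, p s a * x s a ^ 2 := by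
  set E := ∑ s, ∑ a, p s a * x s a with hE
  have h0 : 0 ≤ ∑ s, ∑ a, p s a * (x s a - E) ^ 2 := Finset.sum_nonneg fun s _ =>
    Finset.sum_nonneg fun a _ => mul_nonneg (hp s a) (sq_nonneg _)
  have h1 : ∑ s, ∑ a, p s a * (x s a - E) ^ 2
      = ∑ s, ∑ a, p s a * x s a ^ 2 - 2 * E * (∑ s, ∑ a, p s a * x s a)
        + E ^ 2 * ∑ s, ∑ a, p s a := by
    simp only [Finset.mul_sum, ← Finset.sum_sub_distrib, ← Finset.sum_add_distrib]
    refine Finset.sum_congr rfl fun s _ => Finset.sum_congr rfl fun a _ => ?_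
    ring
  rw [h1, hs, ← hE] at h0
  linarith

/-- The regularization bias of the constrained saddle point. -/
lemma IsSaddleB.Jret_sub_le (hM : MDPAssumptions P r μ0 γ dD) (hα : 0 ≤ α) (hBw : 0 ≤ Bw)
    (hfB : ∀ x, 0 ≤ x → x ≤ Bw → |f x| ≤ Bf) {π0 : S → A → ℝ} (hπ0 : IsPolicy π0)
    (hcov : ∀ s a, occ P μ0 γ π0 s a ≤ Bw * dD s a) {v : S → ℝ} {w : S → A → ℝ}
    (h : IsSaddleB P r μ0 γ dD f α Bw v w) :
    Jret P r μ0 γ π0 - ∑ s, ∑ a, dstar dD w s a * r s a ≤ 2 * α * Bf := by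
  set w0 : S → A → ℝ := fun s a => occ P μ0 γ π0 s a / dD s a with hw0
  have hw0B : ∀ s a, 0 ≤ w0 s a ∧ w0 s a ≤ Bw := fun s a =>
    ⟨div_nonneg (occ_nonneg hM hπ0 s a) (hM.dD_nonneg s a),
      div_le_of_le_mul₀ (hM.dD_nonneg s a) hBw (hcov s a)⟩
  have hd0 : dstar dD w0 = occ P μ0 γ π0 := by
    funext s a
    simp only [dstar, hw0]
    rcases eq_or_ne (dD s a) 0 with h0 | h0
    · have := hcov s a
      rw [h0, mul_zero] at this
      rw [h0, mul_zero]
      exact le_antisymm (occ_nonneg hM hπ0 s a) this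
    · exact div_mul_cancel₀ _ h0
  have hle := h.2.2 w0 hw0B
  rw [Lag_of_bellmanFlow h.bellmanFlow,
    Lag_of_bellmanFlow (by rw [hd0]; exact bellmanFlow_occ hM hπ0), hd0] at hle
  have hbd : ∀ u : S → A → ℝ, (∀ s a, 0 ≤ u s a ∧ u s a ≤ Bw) →
      |∑ s, ∑ a, dD s a * f (u s a)| ≤ Bf := by
    intro u hu
    have := abs_sum_mul_le (p := fun x : S × A => dD x.1 x.2) (x := fun x => f (u x.1 x.2))
      (fun x => hM.dD_nonneg _ _) (by rw [Fintype.sum_prod_type]; exact hM.dD_sum)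
      (fun x => hfB _ (hu _ _).1 (hu _ _).2)
    rwa [Fintype.sum_prod_type] at this
  have h1 := mul_le_mul_of_nonneg_left (abs_le.mp (hbd w0 hw0B)).2 hα
  have h2 := mul_le_mul_of_nonneg_left (abs_le.mp (hbd w h.1)).1 hα
  rw [Jret]
  linarith

end Lagrangian

section Guarantee

variable {P : S → A → S → ℝ} {r : S → A → ℝ} {μ0 : S → ℝ} {γ : ℝ} {dD : S → A → ℝ}
  {f : ℝ → ℝ} {α Bw : ℝ} {V : Finset (S → ℝ)} {W : Finset (S → A → ℝ)} {n n0 : ℕ}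
  {D : Fin n → (S × A) × S} {D0 : Fin n0 → S} {vhat vst : S → ℝ} {what wst : S → A → ℝ}

/-- Uniform closeness of the empirical and population Lagrangians makes the output nearly
optimal for the population Lagrangian at the saddle multiplier. -/
lemma IsProRLOutput.Lag_sub_le {τ : ℝ} (hout : IsProRLOutput r γ f α V W D D0 vhat what)
    (hsad : IsSaddleB P r μ0 γ dD f α Bw vst wst) (hv : vst ∈ V) (hw : wst ∈ W)
    (hdev : ∀ v ∈ V, ∀ w ∈ W,
      |empLag r γ f α D D0 v w - Lag P r μ0 γ dD f α v w| ≤ τ) :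
    Lag P r μ0 γ dD f α vst wst - Lag P r μ0 γ dD f α vst what ≤ 2 * τ := by
  obtain ⟨_, hwW, hmin, hmax⟩ := hout
  obtain ⟨vw, hvw, hvwmin⟩ :=
    Finset.exists_min_image V (fun v => empLag r γ f α D D0 v wst) ⟨vst, hv⟩
  have h1 := (abs_le.mp (hdev vst hv what hwW)).2
  have h2 := hmin vst hv
  have h3 := hmax wst hw vw hvw hvwmin
  have h4 := (abs_le.mp (hdev vw hvw wst hw)).1
  have h5 := hsad.2.1 vw
  linarith

lemma IsProRLOutput.Jret_sub_le [Nonempty A] {ε Mf Bf : ℝ} (hM : MDPAssumptions P r μ0 γ dD)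
    (hε : 0 < ε) (hBf : 0 < Bf) (hMf : 0 < Mf) (hBw : 0 ≤ Bw)
    (hf : StrongConvexOn Set.univ Mf f) (hfB : ∀ x, 0 ≤ x → x ≤ Bw → |f x| ≤ Bf)
    {π0 : S → A → ℝ} (hπ0 : IsPolicy π0) (hcov : ∀ s a, occ P μ0 γ π0 s a ≤ Bw * dD s a)
    (hout : IsProRLOutput r γ f (ε / (4 * Bf)) V W D D0 vhat what)
    (hsad : IsSaddleB P r μ0 γ dD f (ε / (4 * Bf)) Bw vst wst) (hv : vst ∈ V) (hw : wst ∈ W)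
    (hW : ∀ w ∈ W, ∀ s a, 0 ≤ w s a ∧ w s a ≤ Bw)
    (hdev : ∀ v ∈ V, ∀ w ∈ W,
      |empLag r γ f (ε / (4 * Bf)) D D0 v w - Lag P r μ0 γ dD f (ε / (4 * Bf)) v w|
        ≤ ε ^ 3 * Mf * (1 - γ) ^ 2 / (512 * Bf)) :
    Jret P r μ0 γ π0 - Jret P r μ0 γ (extractPolicy (behPolicy dD) what) ≤ ε := by
  have hγ1 : 0 < 1 - γ := sub_pos.mpr hM.γ_lt_one
  have hα : 0 < ε / (4 * Bf) := by positivity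
  have hwhat := hW what hout.2.1
  have hbias := hsad.Jret_sub_le hM hα.le hBw hfB hπ0 hcov
  have hgrow := (hsad.quadratic_growth hM.dD_nonneg hα.le hf hwhat).trans
    (hout.Lag_sub_le hsad hv hw hdev)
  have hperf := hsad.bellmanFlow.sub_Jret_le hM
    (isPolicy_extractPolicy hM.dD_nonneg fun s a => (hwhat s a).1)
  have hextr := sum_abs_dstar_sub_le (w' := wst) hM.dD_nonneg fun s a => (hwhat s a).1
  have hcs := sum_mul_sq_le (x := fun s a => |what s a - wst s a|) hM.dD_sum hM.dD_nonneg
  simp only [sq_abs] at hcs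
  set E := ∑ s, ∑ a, dD s a * |what s a - wst s a|
  set N := ∑ s, ∑ a, dD s a * (what s a - wst s a) ^ 2
  have hN : N ≤ (ε * (1 - γ) / 4) ^ 2 := by
    have h1 : ε / (4 * Bf) * Mf / 4 * N
        ≤ ε / (4 * Bf) * Mf / 4 * (ε * (1 - γ) / 4) ^ 2 := by
      refine hgrow.trans (le_of_eq ?_)
      field_simp
      norm_num
    exact le_of_mul_le_mul_left h1 (by positivity)
  have hE : E ≤ ε * (1 - γ) / 4 := abs_le_of_sq_le_sq' (hcs.trans hN) (by positivity) |>.2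
  have hfin := hperf.trans (div_le_div_of_nonneg_right
    (hextr.trans (mul_le_mul_of_nonneg_left hE (by norm_num))) hγ1.le)
  have e1 : 2 * (ε * (1 - γ) / 4) / (1 - γ) = ε / 2 := by field_simp; norm_num
  have e2 : 2 * (ε / (4 * Bf)) * Bf = ε / 2 := by field_simp; norm_num
  linarith

end Guarantee

section Empirical

variable {P : S → A → S → ℝ} {r : S → A → ℝ} {μ0 : S → ℝ} {γ : ℝ} {dD : S → A → ℝ}
  {f : ℝ → ℝ} {α : ℝ}

/-- The per-transition summand of the empirical Lagrangian. -/
def tupleLag {S A : Type*} (r : S → A → ℝ) (γ : ℝ) (f : ℝ → ℝ) (α : ℝ) (v : S → ℝ)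
    (w : S → A → ℝ) (x : (S × A) × S) : ℝ :=
  w x.1.1 x.1.2 * (r x.1.1 x.1.2 + γ * v x.2 - v x.1.1) - α * f (w x.1.1 x.1.2)

lemma tupleWeight_nonneg (hM : MDPAssumptions P r μ0 γ dD) (x : (S × A) × S) :
    0 ≤ tupleWeight P dD x :=
  mul_nonneg (hM.dD_nonneg _ _) (hM.P_nonneg _ _ _)

lemma sum_tupleWeight (hM : MDPAssumptions P r μ0 γ dD) : ∑ x, tupleWeight P dD x = 1 := by
  simp only [Fintype.sum_prod_type, tupleWeight, ← Finset.mul_sum, hM.P_sum, mul_one]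
  exact hM.dD_sum

lemma sum_tupleWeight_mul_tupleLag (hM : MDPAssumptions P r μ0 γ dD) (v : S → ℝ)
    (w : S → A → ℝ) :
    ∑ x, tupleWeight P dD x * tupleLag r γ f α v w x
      = ∑ s, ∑ a, dD s a * (w s a * eV P r γ v s a) - α * ∑ s, ∑ a, dD s a * f (w s a) := by
  simp only [Fintype.sum_prod_type, tupleWeight, tupleLag]
  rw [Finset.mul_sum, ← Finset.sum_sub_distrib]
  refine Finset.sum_congr rfl fun s _ => ?_
  rw [Finset.mul_sum, ← Finset.sum_sub_distrib]
  refine Finset.sum_congr rfl fun a _ => ?_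
  have h1 : ∀ s', dD s a * P s a s' * (w s a * (r s a + γ * v s' - v s) - α * f (w s a))
      = dD s a * (w s a * (r s a - v s) - α * f (w s a)) * P s a s'
        + dD s a * w s a * γ * (P s a s' * v s') := fun s' => by ring
  simp only [h1]
  rw [Finset.sum_add_distrib, ← Finset.mul_sum, ← Finset.mul_sum, hM.P_sum, eV]
  ring

/-- The deviation of the empirical Lagrangian splits into two empirical-mean deviations. -/
lemma empLag_sub_Lag (hM : MDPAssumptions P r μ0 γ dD) {n n0 : ℕ} (D : Fin n → (S × A) × S)
    (D0 : Fin n0 → S) (v : S → ℝ) (w : S → A → ℝ) :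
    empLag r γ f α D D0 v w - Lag P r μ0 γ dD f α v w
      = ((n : ℝ)⁻¹ * ∑ i, tupleLag r γ f α v w (D i)
          - ∑ x, tupleWeight P dD x * tupleLag r γ f α v w x)
        + ((n0 : ℝ)⁻¹ * ∑ j, (1 - γ) * v (D0 j) - ∑ s, μ0 s * ((1 - γ) * v s)) := by
  have h1 : ∑ i, tupleLag r γ f α v w (D i)
      = ∑ i, w (D i).1.1 (D i).1.2 * (r (D i).1.1 (D i).1.2 + γ * v (D i).2 - v (D i).1.1)
        - α * ∑ i, f (w (D i).1.1 (D i).1.2) := by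
    rw [Finset.mul_sum, ← Finset.sum_sub_distrib]
    rfl
  have h2 : ∑ s, μ0 s * ((1 - γ) * v s) = (1 - γ) * ∑ s, μ0 s * v s := by
    rw [Finset.mul_sum]
    exact Finset.sum_congr rfl fun s _ => by ring
  rw [sum_tupleWeight_mul_tupleLag hM, h1, h2, ← Finset.mul_sum, empLag, Lag]
  ring

lemma abs_tupleLag_le (hM : MDPAssumptions P r μ0 γ dD) (hα : 0 ≤ α) {Bw Bf Bv : ℝ}
    (hBw : 0 ≤ Bw) (hfB : ∀ x, 0 ≤ x → x ≤ Bw → |f x| ≤ Bf) {v : S → ℝ} {w : S → A → ℝ}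
    (hv : ∀ s, |v s| ≤ Bv) (hw : ∀ s a, 0 ≤ w s a ∧ w s a ≤ Bw) (x : (S × A) × S) :
    |tupleLag r γ f α v w x| ≤ α * Bf + Bw * ((1 + γ) * Bv + 1) := by
  obtain ⟨⟨s, a⟩, s'⟩ := x
  have hγ := hM.γ_nonneg
  have h1 : |r s a + γ * v s' - v s| ≤ (1 + γ) * Bv + 1 := by
    have hs := abs_le.mp (hv s)
    have hr0 := hM.r_nonneg s a
    have hr1 := hM.r_le_one s a
    have hs1 := mul_le_mul_of_nonneg_left (abs_le.mp (hv s')).1 hγ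
    have hs2 := mul_le_mul_of_nonneg_left (abs_le.mp (hv s')).2 hγ
    rw [abs_le]
    constructor <;> linarith
  calc |tupleLag r γ f α v w ((s, a), s')|
      ≤ |w s a * (r s a + γ * v s' - v s)| + |α * f (w s a)| := abs_sub _ _
    _ ≤ Bw * ((1 + γ) * Bv + 1) + α * Bf := by
      rw [abs_mul, abs_mul, abs_of_nonneg hα, abs_of_nonneg (hw s a).1]
      exact add_le_add (mul_le_mul (hw s a).2 h1 (abs_nonneg _) hBw)
        (mul_le_mul_of_nonneg_left (hfB _ (hw s a).1 (hw s a).2) hα)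
    _ = _ := add_comm _ _

end Empirical

/-- Corollary 4: single-policy concentrability, competing with `π*₀`. -/
theorem stmt8 :
    ∃ C1 : ℝ, 0 < C1 ∧
    ∀ (S A : Type) [Fintype S] [Fintype A] [Nonempty S] [Nonempty A]
      [MeasurableSpace S] [MeasurableSpace A]
      [MeasurableSingletonClass S] [MeasurableSingletonClass A]
      (P : S → A → S → ℝ) (r : S → A → ℝ) (μ0 : S → ℝ) (γ : ℝ) (dD : S → A → ℝ),
      MDPAssumptions P r μ0 γ dD →
      -- the data distribution is the occupancy of the behavior policy
      (∀ s a, dD s a = occ P μ0 γ (behPolicy dD) s a) →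
      ∀ (f f' : ℝ → ℝ) (ε δ : ℝ), 0 < ε → 0 < δ → δ < 1 →
      ∀ (Mf Bw0 Bf'0 Bf0 Bv0 Be0 : ℝ) (π0 : S → A → ℝ), 1 < Bw0 → 0 < Bf0 →
      -- π*₀ is an optimal policy whose occupancy d*₀ is covered: d*₀/d^D ≤ B_{w,0}
      IsPolicy π0 →
      (∀ π : S → A → ℝ, IsPolicy π → Jret P r μ0 γ π ≤ Jret P r μ0 γ π0) →
      (∀ s a, occ P μ0 γ π0 s a ≤ Bw0 * dD s a) →
      -- regularity of f on [0, B_{w,0}], with α'_ε := ε/(4 B_{f,0})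
      RegAssumptions f f' Mf Bw0 Bf'0 Bf0 →
      Bv0 = (ε / (4 * Bf0) * Bf'0 + 1) / (1 - γ) → Be0 = (1 + γ) * Bv0 + 1 →
      -- saddle point of the constrained LP (B_w = B_{w,0}) at α = α'_ε, realizable
      ∀ (vst : S → ℝ) (wst : S → A → ℝ),
        IsSaddleB P r μ0 γ dD f (ε / (4 * Bf0)) Bw0 vst wst →
      ∀ (V : Finset (S → ℝ)) (W : Finset (S → A → ℝ)),
        vst ∈ V → wst ∈ W →
        (∀ w ∈ W, ∀ s a, 0 ≤ w s a ∧ w s a ≤ Bw0) →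
        (∀ v ∈ V, ∀ s, |v s| ≤ Bv0) →
      ∀ (n n0 : ℕ), 0 < n → 0 < n0 →
        C1 * (ε * Bf0 + 4 * Bw0 * Be0 * Bf0) ^ 2 / (ε ^ 6 * Mf ^ 2 * (1 - γ) ^ 4)
            * Real.log (4 * (V.card : ℝ) * (W.card : ℝ) / δ) ≤ (n : ℝ) →
        C1 * (4 * Bv0 * Bf0) ^ 2 / (ε ^ 6 * Mf ^ 2 * (1 - γ) ^ 2)
            * Real.log (4 * (V.card : ℝ) / δ) ≤ (n0 : ℝ) →
      ∀ (vhat : (Fin n → (S × A) × S) × (Fin n0 → S) → S → ℝ)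
        (what : (Fin n → (S × A) × S) × (Fin n0 → S) → S → A → ℝ),
        (∀ ω, IsProRLOutput r γ f (ε / (4 * Bf0)) V W ω.1 ω.2 (vhat ω) (what ω)) →
        1 - ENNReal.ofReal δ ≤
          dataMeasure P dD μ0 n n0 {ω |
            Jret P r μ0 γ π0
              - Jret P r μ0 γ (extractPolicy (behPolicy dD) (what ω)) ≤ ε } := by
  refine ⟨131072, by norm_num, ?_⟩
  intro S A _ _ _ _ _ _ _ _ P r μ0 γ dD hM _ f f' ε δ hε hδ _ Mf Bw0 Bf'0 Bf0 Bv0 Be0 π0 hBw1 hBf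
    hπ0 _ hcov hreg hBv hBe vst wst hsad V W hvV hwW hW hV n n0 hn hn0 hnle hn0le vhat what hout
  have hγ := hM.γ_nonneg
  have hγ1 : 0 < 1 - γ := sub_pos.mpr hM.γ_lt_one
  have hMf := hreg.Mf_pos
  have hBw : 0 < Bw0 := by linarith
  have hBf' : 0 ≤ Bf'0 := (abs_nonneg _).trans (hreg.f'_bdd 0 le_rfl hBw.le)
  have hBv0 : 0 < Bv0 := by rw [hBv]; positivity
  have hBe0 : 0 < Be0 := by rw [hBe]; positivity
  set α := ε / (4 * Bf0) with hα
  have hα0 : 0 < α := by rw [hα]; positivity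
  set t := ε ^ 3 * Mf * (1 - γ) ^ 2 / (1024 * Bf0) with ht
  have ht0 : 0 < t := by rw [ht]; positivity
  have := discMeasure_isProbabilityMeasure (tupleWeight_nonneg hM) (sum_tupleWeight hM)
  have := discMeasure_isProbabilityMeasure (fun s => (hM.μ0_pos s).le) hM.μ0_sum
  have hbad1 := uniform_deviation (tupleWeight_nonneg hM) (sum_tupleWeight hM) (V ×ˢ W)
    ⟨(vst, wst), Finset.mk_mem_product hvV hwW⟩ (g := fun q => tupleLag r γ f α q.1 q.2)
    (B := α * Bf0 + Bw0 * Be0) (by positivity)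
    (fun q hq x => by
      rw [Finset.mem_product] at hq
      rw [hBe]
      exact abs_tupleLag_le hM hα0.le hBw.le hreg.f_bdd (hV q.1 hq.1) (hW q.2 hq.2) x)
    hn ht0 hδ (by
      rw [Finset.card_product, Nat.cast_mul, ← mul_assoc]
      refine le_trans (le_of_eq ?_) hnle
      congr 1
      rw [ht, hα]
      field_simp
      ring)
  have hbad2 := uniform_deviation (fun s => (hM.μ0_pos s).le) hM.μ0_sum V ⟨vst, hvV⟩
    (g := fun v s => (1 - γ) * v s) (B := (1 - γ) * Bv0) (by positivity)
    (fun v hv s => by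
      rw [abs_mul, abs_of_pos hγ1]
      exact mul_le_mul_of_nonneg_left (hV v hv s) hγ1.le)
    hn0 ht0 hδ (by
      refine le_trans (le_of_eq ?_) hn0le
      congr 1
      rw [ht]
      field_simp
      ring)
  set bad1 := {D : Fin n → (S × A) × S | ∃ q ∈ V ×ˢ W,
    t < |(n : ℝ)⁻¹ * ∑ k, tupleLag r γ f α q.1 q.2 (D k)
      - ∑ x, tupleWeight P dD x * tupleLag r γ f α q.1 q.2 x|} with hb1
  set bad2 := {D0 : Fin n0 → S | ∃ v ∈ V,
    t < |(n0 : ℝ)⁻¹ * ∑ k, (1 - γ) * v (D0 k) - ∑ s, μ0 s * ((1 - γ) * v s)|} with hb2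
  have : IsProbabilityMeasure (dataMeasure P dD μ0 n n0) := by
    unfold dataMeasure
    infer_instance
  have hbad : dataMeasure P dD μ0 n n0 (bad1 ×ˢ Set.univ ∪ Set.univ ×ˢ bad2)
      ≤ ENNReal.ofReal δ := by
    refine (measure_union_le _ _).trans ?_
    rw [dataMeasure, Measure.prod_prod, Measure.prod_prod, measure_univ, measure_univ, mul_one,
      one_mul, ← add_halves δ, ENNReal.ofReal_add (by positivity) (by positivity)]
    exact add_le_add hbad1 hbad2
  calc 1 - ENNReal.ofReal δ
      ≤ 1 - dataMeasure P dD μ0 n n0 (bad1 ×ˢ Set.univ ∪ Set.univ ×ˢ bad2) :=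
        tsub_le_tsub_left hbad 1
    _ = dataMeasure P dD μ0 n n0 (bad1 ×ˢ Set.univ ∪ Set.univ ×ˢ bad2)ᶜ :=
        (prob_compl_eq_one_sub (Set.toFinite _).measurableSet).symm
    _ ≤ _ := measure_mono fun ω hω => ?_
  rw [Set.mem_compl_iff, Set.mem_union, not_or] at hω
  rw [Set.mem_ofPred_eq]
  refine (hout ω).Jret_sub_le hM hε hBf hMf hBw.le hreg.strong hreg.f_bdd hπ0 hcov hsad hvV hwW hW
    fun v hv w hw => ?_
  have h1 : ω.1 ∉ bad1 := fun h => hω.1 ⟨h, Set.mem_univ _⟩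
  have h2 : ω.2 ∉ bad2 := fun h => hω.2 ⟨Set.mem_univ _, h⟩
  rw [hb1, Set.mem_ofPred_eq] at h1
  rw [hb2, Set.mem_ofPred_eq] at h2
  push Not at h1 h2
  rw [empLag_sub_Lag hM]
  calc _ ≤ t + t := (abs_add_le _ _).trans
        (add_le_add (h1 (v, w) (Finset.mk_mem_product hv hw)) (h2 v hv))
    _ = _ := by
      rw [ht]
      field_simp
      norm_num
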